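/- Let n ≥ 2 be an integer, Γ = ℝ × {0, 1, …, n−1}, and let Λ ⊂ ℝ² be a closed set that is 2-periodic with respect to the second variable. Suppose (Γ, Λ) is a Heisenberg uniqueness pair. Then for every l ≥ 1 and every choice of integers 1 ≤ α_1 < α_2 < ⋯ < α_l ≤ n−1, there is no nonempty open interval J ⊂ ℝ such that J ∩ Π(Λ) is nonempty and J ∩ Π(Λ) ⊂ ⋃_{j=1}^{l} Π^{α_j*}_{ne}(Λ). -/

import Mathlib

open MeasureTheory Complex

/-- Fourier transform with the convention `f̂(ξ) = ∫ e^{πixξ} f(x) dx`. -/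
noncomputable def FT (f : ℝ → ℂ) (ξ : ℝ) : ℂ :=
  ∫ x : ℝ, Complex.exp (Real.pi * Complex.I * x * ξ) * f x

/-- `e^{πiη}`. -/
noncomputable def cexpEta (η : ℝ) : ℂ := Complex.exp (Real.pi * Complex.I * η)

/-- `Λ` is 2-periodic with respect to the second variable. -/
def Periodic2 (Λ : Set (ℝ × ℝ)) : Prop :=
  ∀ ξ η : ℝ, (ξ, η) ∈ Λ ↔ (ξ, η + 2) ∈ Λ

/-- The projection `Π(Λ)` of `Λ` on the x-axis. -/
def proj (Λ : Set (ℝ × ℝ)) : Set ℝ := {ξ | ∃ η : ℝ, (ξ, η) ∈ Λ}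

/-- `Img(ξ) = {η ∈ [0,2) : (ξ,η) ∈ Λ}`. -/
def Img (Λ : Set (ℝ × ℝ)) (ξ : ℝ) : Set ℝ := {η | η ∈ Set.Ico (0 : ℝ) 2 ∧ (ξ, η) ∈ Λ}

/-- `Π^k(Λ)` for `k < n`: points of `Π(Λ)` whose `Img` has exactly `k` elements. -/
def projExact (Λ : Set (ℝ × ℝ)) (k : ℕ) : Set ℝ :=
  {ξ | ξ ∈ proj Λ ∧ (Img Λ ξ).encard = k}

/-- `Π^n(Λ)`: points of `Π(Λ)` whose `Img` has at least `n` elements. -/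
def projAtLeast (Λ : Set (ℝ × ℝ)) (n : ℕ) : Set ℝ :=
  {ξ | ξ ∈ proj Λ ∧ (n : ℕ∞) ≤ (Img Λ ξ).encard}

/-- `ψ ∈ P^{E,ξ}_l` : there are an open interval `I ∋ ξ` and `φ_1,…,φ_{l-1} ∈ L¹(ℝ)` with
`φ̂_1 + φ̂_2 ψ + ⋯ + φ̂_{l-1} ψ^{l-2} + ψ^{l-1} = 0` on `I ∩ E`. -/
def Pmem (E : Set ℝ) (ξ : ℝ) (l : ℕ) (ψ : ℝ → ℂ) : Prop :=
  ∃ a b : ℝ, ξ ∈ Set.Ioo a b ∧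
    ∃ φ : Fin (l - 1) → ℝ → ℂ, (∀ i, Integrable (φ i)) ∧
      ∀ x ∈ Set.Ioo a b ∩ E,
        (∑ i : Fin (l - 1), FT (φ i) x * ψ x ^ (i : ℕ)) + ψ x ^ (l - 1) = 0

/-- `Π^{1*}(Λ)`: those `ξ ∈ Π^1(Λ)` such that `χ ∈ P^{Π^1(Λ),ξ}_n`, where
`χ(ξ') = e^{πiη}` with `η` the unique element of `Img(ξ')`. -/
def projOneStar (Λ : Set (ℝ × ℝ)) (n : ℕ) : Set ℝ :=
  {ξ | ξ ∈ projExact Λ 1 ∧ ∃ χ : ℝ → ℂ,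
    (∀ ξ' ∈ projExact Λ 1, ∀ η ∈ Img Λ ξ', χ ξ' = cexpEta η) ∧
    Pmem (projExact Λ 1) ξ n χ}

/-- `Π^{k*}_{su}(Λ)`. -/
def projStarSu (Λ : Set (ℝ × ℝ)) (n k : ℕ) : Set ℝ :=
  {ξ | ξ ∈ projExact Λ k ∧ ∃ a b : ℝ, ξ ∈ Set.Ioo a b ∧
    ∃ φ : Fin (n - 1) → ℝ → ℂ, (∀ i, Integrable (φ i)) ∧
      ∀ ξ' ∈ Set.Ioo a b ∩ projExact Λ k, ∀ η ∈ Img Λ ξ',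
        (∑ i : Fin (n - 1), FT (φ i) ξ' * cexpEta η ^ (i : ℕ)) = -(cexpEta η ^ (n - 1))}

/-- `Π^{k*}_{ne}(Λ)` for `k ≥ 2`. -/
def projStarNe (Λ : Set (ℝ × ℝ)) (k : ℕ) : Set ℝ :=
  {ξ | ξ ∈ projExact Λ k ∧ ∃ a b : ℝ, ξ ∈ Set.Ioo a b ∧
    ∃ φ : Fin k → ℝ → ℂ, (∀ i, Integrable (φ i)) ∧
      ∀ ξ' ∈ Set.Ioo a b ∩ projExact Λ k, ∀ η ∈ Img Λ ξ',
        (∑ i : Fin k, FT (φ i) ξ' * cexpEta η ^ (i : ℕ)) = -(cexpEta η ^ k)}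

/-- `(Γ, Λ)` with `Γ = ℝ × {0,…,n-1}` is a Heisenberg uniqueness pair: every admissible
measure `μ = Σ_m (x ↦ (x,m))_*(f_m dx)` (with each `f_m ∈ L¹(ℝ)`) whose Fourier transform
`μ̂(ξ,η) = Σ_m e^{mπiη} f̂_m(ξ)` vanishes on `Λ` must be zero, i.e. each `f_m = 0` a.e. -/
def IsHUP (n : ℕ) (Λ : Set (ℝ × ℝ)) : Prop :=
  ∀ f : Fin n → ℝ → ℂ, (∀ m, Integrable (f m)) →
    (∀ ξ η : ℝ, (ξ, η) ∈ Λ → ∑ m : Fin n, cexpEta η ^ (m : ℕ) * FT (f m) ξ = 0) →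
    ∀ m, f m =ᵐ[volume] (0 : ℝ → ℂ)

/-- `Π^{k*}_{ne}(Λ)` including the convention `Π^{1*}_{ne}(Λ) := Π^{1*}(Λ)`. -/
def projStarNeGen (Λ : Set (ℝ × ℝ)) (n k : ℕ) : Set ℝ :=
  if k = 1 then projOneStar Λ n else projStarNe Λ k

open FourierTransform

lemma FT_eq_fourier (f : ℝ → ℂ) (ξ : ℝ) : FT f ξ = 𝓕 f (-ξ / 2) := by
  rw [Real.fourier_real_eq_integral_exp_smul, FT]
  congr 1
  ext x
  rw [smul_eq_mul]
  congr 2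
  push_cast
  ring

lemma FT_continuous {f : ℝ → ℂ} (hf : Integrable f) : Continuous (FT f) := by
  have h1 : Continuous (𝓕 f) :=
    VectorFourier.fourierIntegral_continuous Real.continuous_fourierChar
      (by simpa using (continuous_inner (𝕜 := ℝ) (E := ℝ))) hf
  have : FT f = fun ξ => 𝓕 f (-ξ / 2) := funext (FT_eq_fourier f)
  rw [this]
  exact h1.comp (by fun_prop)

lemma exists_conv {f g : ℝ → ℂ} (hf : Integrable f) (hg : Integrable g) :
    ∃ h : ℝ → ℂ, Integrable h ∧ ∀ ξ, FT h ξ = FT f ξ * FT g ξ := by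
  refine ⟨_, hf.integrable_convolution (ContinuousLinearMap.mul ℂ ℂ) hg, fun ξ => ?_⟩
  rw [FT_eq_fourier, FT_eq_fourier, FT_eq_fourier]
  exact Real.fourier_mul_convolution_eq hf hg _

lemma exists_bump {a b : ℝ} (hab : a < b) :
    ∃ g : ℝ → ℂ, Integrable g ∧ (∀ ξ, ξ ∉ Set.Ioo a b → FT g ξ = 0) ∧ ∃ ξ, FT g ξ ≠ 0 := by
  have hmem : Set.Ioo (-b / 2) (-a / 2) ∈ nhds (-((a + b) / 2) / 2) :=
    Ioo_mem_nhds (by linarith) (by linarith)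
  obtain ⟨u, hu1, hu2, hu3, -, hu5⟩ := exists_contDiff_tsupport_subset (n := ⊤) hmem
  let v : ℝ → ℂ := fun x => (u x : ℂ)
  have hv2 : HasCompactSupport v := hu2.comp_left (g := fun x : ℝ => (x : ℂ)) (by simp)
  have hv3 : ContDiff ℝ (⊤ : ℕ∞) v := Complex.ofRealCLM.contDiff.comp hu3
  let S : SchwartzMap ℝ ℂ := hv2.toSchwartzMap hv3
  have key : ∀ ξ, FT (𝓕⁻ S : SchwartzMap ℝ ℂ) ξ = (u (-ξ / 2) : ℂ) := by
    intro ξ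
    rw [FT_eq_fourier, ← SchwartzMap.fourier_coe, FourierTransform.fourier_fourierInv_eq]
    rfl
  refine ⟨(𝓕⁻ S : SchwartzMap ℝ ℂ), SchwartzMap.integrable _, ?_, (a + b) / 2, ?_⟩
  · intro ξ hξ
    rw [key]
    have : u (-ξ / 2) = 0 := by
      by_contra h
      have h2 := hu1 (subset_tsupport u h)
      exact hξ ⟨by linarith [h2.2], by linarith [h2.1]⟩
    simp [this]
  · rw [key, hu5]; simp

lemma FT_ae_zero {g : ℝ → ℂ} (hg : g =ᵐ[volume] (0 : ℝ → ℂ)) (ξ : ℝ) : FT g ξ = 0 := by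
  unfold FT
  rw [integral_eq_zero_of_ae]
  filter_upwards [hg] with x hx
  simp [hx]

lemma FT_zero (ξ : ℝ) : FT (0 : ℝ → ℂ) ξ = 0 := by simp [FT]

lemma kill {n : ℕ} {Λ : Set (ℝ × ℝ)} (hHUP : IsHUP n Λ) {K : ℕ} (hK : K < n) {a b : ℝ}
    (hab : a < b) (φ : Fin K → ℝ → ℂ) (hφ : ∀ i, Integrable (φ i))
    (h : ∀ ξ ∈ Set.Ioo a b, ∀ η, (ξ, η) ∈ Λ →
      (∑ i : Fin K, FT (φ i) ξ * cexpEta η ^ (i : ℕ)) + cexpEta η ^ K = 0) : False := by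
  obtain ⟨g, hg, hg0, ξ₁, hξ₁⟩ := exists_bump hab
  choose F hF hF2 using fun i => exists_conv (hφ i) hg
  let G : ℕ → ℝ → ℂ := fun m => if hm : m < K then F ⟨m, hm⟩ else if m = K then g else 0
  have hG1 : ∀ m, Integrable (G m) := by
    intro m
    simp only [G]
    split_ifs
    · exact hF _
    · exact hg
    · exact integrable_zero _ _ _
  have hGK : G K = g := by simp [G]
  have hGi : ∀ i : Fin K, G i = F i := by intro i; simp [G]
  have hG0 : ∀ m, K < m → G m = 0 := by
    intro m hm; simp [G, not_lt.2 hm.le, hm.ne']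
  have := hHUP (fun m => G m) (fun m => hG1 m) ?_ ⟨K, hK⟩
  · simp only [hGK] at this
    exact hξ₁ (FT_ae_zero this ξ₁)
  · intro ξ η hΛ
    rw [Fin.sum_univ_eq_sum_range (fun m => cexpEta η ^ m * FT (G m) ξ) n]
    have h1 : ∑ m ∈ Finset.range n, cexpEta η ^ m * FT (G m) ξ
        = ∑ m ∈ Finset.range (K + 1), cexpEta η ^ m * FT (G m) ξ := by
      symm
      apply Finset.sum_subset
      · intro x hx; simp at hx ⊢; omega
      · intro x _ hx
        rw [hG0 x (by simp at hx; omega), FT_zero, mul_zero]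
    rw [h1, Finset.sum_range_succ, hGK, ← Fin.sum_univ_eq_sum_range]
    simp only [hGi, hF2]
    by_cases hξ : ξ ∈ Set.Ioo a b
    · have := h ξ hξ η hΛ
      calc _ = ((∑ i : Fin K, FT (φ i) ξ * cexpEta η ^ (i : ℕ)) + cexpEta η ^ K) * FT g ξ := by
            rw [add_mul, Finset.sum_mul]
            congr 1
            apply Finset.sum_congr rfl
            intros; ring
        _ = 0 := by rw [this, zero_mul]
    · simp [hg0 ξ hξ]

lemma cexpEta_add_zsmul (η : ℝ) (k : ℤ) : cexpEta (η + k * 2) = cexpEta η := by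
  unfold cexpEta
  rw [Complex.exp_eq_exp_iff_exists_int]
  exact ⟨k, by push_cast; ring⟩

lemma cexpEta_injOn : Set.InjOn cexpEta (Set.Ico 0 2) := by
  intro x hx y hy h
  unfold cexpEta at h
  rw [Complex.exp_eq_exp_iff_exists_int] at h
  obtain ⟨k, hk⟩ := h
  have hpi : (Real.pi : ℂ) * I ≠ 0 := by simp [Real.pi_ne_zero]
  have h2 : (x : ℂ) = y + 2 * k := by
    apply mul_left_cancel₀ hpi
    rw [hk]; ring
  have h3 : x = y + 2 * k := by exact_mod_cast h2
  have : k = 0 := by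
    have h4 : (k : ℝ) < 1 := by linarith [hx.2, hy.1]
    have h5 : (-1 : ℝ) < k := by linarith [hx.1, hy.2]
    have h4' : k < 1 := by exact_mod_cast h4
    have h5' : -1 < k := by exact_mod_cast h5
    omega
  simpa [this] using h3

lemma periodic_int {Λ : Set (ℝ × ℝ)} (hper : Periodic2 Λ) (ξ η : ℝ) (k : ℤ) :
    (ξ, η) ∈ Λ ↔ (ξ, η + k * 2) ∈ Λ := by
  induction k using Int.induction_on with
  | zero => simp
  | succ i ih =>
    rw [ih, hper]
    have : η + ((i : ℤ) : ℝ) * 2 + 2 = η + (((i : ℤ) + 1 : ℤ) : ℝ) * 2 := by push_cast; ring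
    rw [this]
  | pred i ih =>
    rw [ih, hper ξ (η + ((-(i : ℤ) - 1 : ℤ) : ℝ) * 2)]
    have : η + ((-(i : ℤ) : ℤ) : ℝ) * 2 = η + ((-(i : ℤ) - 1 : ℤ) : ℝ) * 2 + 2 := by
      push_cast; ring
    rw [this]

lemma exists_Img {Λ : Set (ℝ × ℝ)} (hper : Periodic2 Λ) {ξ η : ℝ} (h : (ξ, η) ∈ Λ) :
    ∃ η' ∈ Img Λ ξ, cexpEta η' = cexpEta η := by
  have hs := toIcoMod_mem_Ico' (two_pos : (0 : ℝ) < 2) η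
  have he : toIcoMod (two_pos : (0 : ℝ) < 2) 0 η
      = η + ((-toIcoDiv (two_pos : (0 : ℝ) < 2) 0 η : ℤ) : ℝ) * 2 := by
    rw [toIcoMod, zsmul_eq_mul]; push_cast; ring
  refine ⟨toIcoMod (two_pos : (0 : ℝ) < 2) 0 η, ⟨hs, ?_⟩, ?_⟩
  · rw [he]; exact (periodic_int hper _ _ _).1 h
  · rw [he]; exact cexpEta_add_zsmul _ _

lemma near_root {K : ℕ} (c : Fin K → ℂ) (s : Finset ℂ) (hs : s.card = K)
    (hroot : ∀ w ∈ s, ∑ i : Fin K, c i * w ^ (i : ℕ) = -(w ^ K)) (z : ℂ) :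
    ∑ i : Fin K, c i * z ^ (i : ℕ) + z ^ K = ∏ w ∈ s, (z - w) := by
  open Polynomial in
  let q : ℂ[X] := ∑ i : Fin K, C (c i) * X ^ (i : ℕ)
  let r : ℂ[X] := ∏ w ∈ s, (X - C w)
  have hq : q.degree < K := by
    apply lt_of_le_of_lt (degree_sum_le _ _)
    refine (Finset.sup_lt_iff (WithBot.bot_lt_coe K)).2 ?_
    intro i _
    exact lt_of_le_of_lt (degree_C_mul_X_pow_le _ _) (WithBot.coe_lt_coe.2 i.2)
  have hrm : r.Monic := monic_prod_of_monic _ _ (fun i _ => monic_X_sub_C i)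
  have hrd : r.degree = K := by
    simp [r, degree_prod, hs]
  have hd : (X ^ K - r).degree < (K : WithBot ℕ) := by
    have := degree_sub_lt_left (p := (X ^ K : ℂ[X])) (q := r) (by rw [hrd, degree_X_pow])
      (by exact pow_ne_zero _ X_ne_zero) (by rw [hrm.leadingCoeff, (monic_X_pow K).leadingCoeff])
    rwa [degree_X_pow] at this
  have hz : q + (X ^ K - r) = 0 := by
    apply eq_zero_of_degree_lt_of_eval_finset_eq_zero s
    · rw [hs]; exact lt_of_le_of_lt (degree_add_le _ _) (max_lt hq hd)
    · intro w hw
      have h1 : r.eval w = 0 := by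
        simp only [r, eval_prod]
        exact Finset.prod_eq_zero hw (by simp)
      have h2 := hroot w hw
      simp [q, eval_finsetSum, h1, h2]
  have := congrArg (eval z) hz
  simp [q, r, eval_finsetSum, eval_prod] at this
  linear_combination this

lemma exists_sep (s : Finset ℂ) : ∃ ε > 0, ∀ z ∈ s, ∀ w ∈ s, dist z w ≤ 2 * ε → z = w := by
  classical
  let t := (s ×ˢ s).filter (fun p => p.1 ≠ p.2)
  have : ∀ᶠ ε in nhdsWithin (0 : ℝ) (Set.Ioi 0), ∀ p ∈ t, 2 * ε < dist p.1 p.2 := by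
    rw [Finset.eventually_all]
    intro p hp
    have hp' : 0 < dist p.1 p.2 := dist_pos.2 (by simp [t] at hp; exact hp.2)
    have : Filter.Tendsto (fun ε : ℝ => 2 * ε) (nhdsWithin (0 : ℝ) (Set.Ioi 0)) (nhds (2 * 0)) :=
      ((continuous_const.mul continuous_id).tendsto 0).mono_left nhdsWithin_le_nhds
    rw [mul_zero] at this
    exact this.eventually_lt_const hp'
  obtain ⟨ε, h1, h2⟩ := (this.and self_mem_nhdsWithin).exists
  refine ⟨ε, h2, fun z hz w hw hd => ?_⟩
  by_contra hne
  have := h1 (z, w) (by simp [t, hz, hw, hne])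
  simp at this
  linarith

lemma closed_D {Λ : Set (ℝ × ℝ)} (hclosed : IsClosed Λ) (B : Set ℂ) (hB : IsClosed B) :
    IsClosed {ξ : ℝ | ∃ η ∈ Set.Icc (0 : ℝ) 2, (ξ, η) ∈ Λ ∧ cexpEta η ∈ B} := by
  have hc : Continuous cexpEta := by unfold cexpEta; fun_prop
  have h1 : IsClosed {p : ℝ × Set.Icc (0 : ℝ) 2 | (p.1, (p.2 : ℝ)) ∈ Λ ∧ cexpEta p.2 ∈ B} := by
    apply IsClosed.inter
    · exact hclosed.preimage (f := fun p : ℝ × Set.Icc (0 : ℝ) 2 => (p.1, (p.2 : ℝ))) (by fun_prop)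
    · exact hB.preimage (f := fun p : ℝ × Set.Icc (0 : ℝ) 2 => cexpEta p.2) (by fun_prop)
  convert isClosedMap_fst_of_compactSpace _ h1 using 1
  ext ξ
  constructor
  · rintro ⟨η, hη, h⟩
    exact ⟨(ξ, ⟨η, hη⟩), h, rfl⟩
  · rintro ⟨⟨ξ', η, hη⟩, h, rfl⟩
    exact ⟨η, hη, h⟩

/-- finset of the values of `cexpEta` on `Img`. -/
lemma exists_finset {Λ : Set (ℝ × ℝ)} {K : ℕ} {ξ : ℝ} (h : (Img Λ ξ).encard = K) :
    ∃ s : Finset ℂ, s.card = K ∧ ∀ z, z ∈ s ↔ ∃ η ∈ Img Λ ξ, cexpEta η = z := by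
  have hinj : Set.InjOn cexpEta (Img Λ ξ) := cexpEta_injOn.mono (fun _ hx => hx.1)
  have hfin : (cexpEta '' Img Λ ξ).encard = K := by rw [hinj.encard_image, h]
  have hf : (cexpEta '' Img Λ ξ).Finite := Set.finite_of_encard_eq_coe hfin
  refine ⟨hf.toFinset, ?_, ?_⟩
  · rw [hf.encard_eq_coe_toFinset_card] at hfin
    exact_mod_cast hfin
  · intro z; simp

lemma hupStar_mem {Λ : Set (ℝ × ℝ)} {n k : ℕ} {ξ : ℝ} (h : ξ ∈ projStarNeGen Λ n k) :
    ξ ∈ projExact Λ k := by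
  unfold projStarNeGen at h
  split_ifs at h with hk
  · subst hk; exact h.1
  · exact h.1

lemma main_ind {n : ℕ} (hn : 2 ≤ n) {Λ : Set (ℝ × ℝ)}
    (hclosed : IsClosed Λ) (hper : Periodic2 Λ) (hHUP : IsHUP n Λ) (K : ℕ) (hK : K ≤ n - 1) :
    ∀ a b : ℝ, a < b →
      (∀ ξ ∈ Set.Ioo a b ∩ proj Λ, ∃ k, 1 ≤ k ∧ k ≤ K ∧ ξ ∈ projStarNeGen Λ n k) → False := by
  induction K with
  | zero =>
    intro a b hab h
    refine kill hHUP (K := 0) (by omega) hab (fun _ => 0) (fun i => i.elim0) ?_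
    intro ξ hξ η hη
    obtain ⟨k, h1, h2, -⟩ := h ξ ⟨hξ, η, hη⟩
    omega
  | succ K ih =>
    have ih := ih (by omega)
    intro a b hab h
    by_cases hne : ∃ ξ₀ ∈ Set.Ioo a b, ξ₀ ∈ projStarNeGen Λ n (K + 1)
    swap
    · push Not at hne
      refine ih a b hab fun ξ hξ => ?_
      obtain ⟨k, h1, h2, h3⟩ := h ξ hξ
      refine ⟨k, h1, ?_, h3⟩
      rcases h2.lt_or_eq with h2 | h2
      · omega
      · subst h2; exact (hne ξ hξ.1 h3).elim
    obtain ⟨ξ₀, hξ₀, hst⟩ := hne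
    unfold projStarNeGen at hst
    split_ifs at hst with hK1
    · -- K + 1 = 1
      obtain ⟨-, χ, hχ, a', b', hab', φ, hφ, hrel⟩ := hst
      refine kill hHUP (K := n - 1) (by omega) (a := max a a') (b := min b b')
        (lt_trans (max_lt hξ₀.1 hab'.1) (lt_min hξ₀.2 hab'.2)) φ hφ ?_
      intro ξ hξ η hη
      obtain ⟨ha1, ha2⟩ := max_lt_iff.1 hξ.1
      obtain ⟨hb1, hb2⟩ := lt_min_iff.1 hξ.2
      obtain ⟨k, h1, h2, h3⟩ := h ξ ⟨⟨ha1, hb1⟩, η, hη⟩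
      obtain rfl : k = 1 := by omega
      have h4 := hupStar_mem h3
      obtain ⟨η', h5, h6⟩ := exists_Img hper hη
      have := hrel ξ ⟨⟨ha2, hb2⟩, h4⟩
      rwa [hχ ξ h4 η' h5, h6] at this
    · obtain ⟨hex, a', b', hab', φ, hφ, hrel⟩ := hst
      obtain ⟨s, hs, hsm⟩ := exists_finset hex.2
      obtain ⟨ε, hε, hsep⟩ := exists_sep s
      let D : Set ℝ := ⋂ z ∈ s, {ξ : ℝ | ∃ η ∈ Set.Icc (0 : ℝ) 2, (ξ, η) ∈ Λ ∧
        cexpEta η ∈ Metric.closedBall z ε}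
      have hD : IsClosed D := isClosed_biInter fun z _ => closed_D hclosed _ Metric.isClosed_closedBall
      -- points of D have at least K+1 values
      have hDcard : ∀ ξ ∈ D, ((K + 1 : ℕ) : ℕ∞) ≤ (Img Λ ξ).encard := by
        intro ξ hξ
        have : ∀ z : ℂ, ∃ η : ℝ, z ∈ s → η ∈ Img Λ ξ ∧ dist (cexpEta η) z ≤ ε := by
          intro z
          by_cases hz : z ∈ s
          · have := Set.mem_iInter₂.1 hξ z hz
            obtain ⟨η, -, h1, h2⟩ := this
            obtain ⟨η', h3, h4⟩ := exists_Img hper h1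
            exact ⟨η', fun _ => ⟨h3, by rw [h4]; exact h2⟩⟩
          · exact ⟨0, fun h => (hz h).elim⟩
        choose e he using this
        have hinj : Set.InjOn e (s : Set ℂ) := by
          intro z hz w hw hzw
          apply hsep z hz w hw
          have h1 := (he z hz).2
          have h2 := (he w hw).2
          rw [hzw] at h1
          have := dist_triangle_left z w (cexpEta (e w))
          linarith
        rw [← hs, ← Set.encard_coe_eq_coe_finsetCard, ← hinj.encard_image]
        apply Set.encard_le_encard
        rintro _ ⟨z, hz, rfl⟩
        exact (he z hz).1
      have hev : ∀ᶠ ξ in nhds ξ₀, ∀ z ∈ s,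
          ‖∑ i : Fin (K + 1), FT (φ i) ξ * z ^ (i : ℕ) + z ^ (K + 1)‖ < ε ^ (K + 1) := by
        rw [Finset.eventually_all]
        intro z hz
        have hc : Continuous fun ξ =>
            ‖∑ i : Fin (K + 1), FT (φ i) ξ * z ^ (i : ℕ) + z ^ (K + 1)‖ := by
          have := fun i => FT_continuous (hφ i)
          fun_prop
        apply hc.continuousAt.eventually_lt_const
        obtain ⟨η, h1, rfl⟩ := (hsm z).1 hz
        beta_reduce
        rw [hrel ξ₀ ⟨hab', hex⟩ η h1]
        simp only [neg_add_cancel, norm_zero]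
        positivity
      have hev2 := (hev.and (Ioo_mem_nhds hξ₀.1 hξ₀.2)).and (Ioo_mem_nhds hab'.1 hab'.2)
      obtain ⟨c, d, hcd, hcdsub⟩ := mem_nhds_iff_exists_Ioo_subset.1 hev2
      have hsubD : ∀ ξ ∈ Set.Ioo c d, ξ ∈ projExact Λ (K + 1) → ξ ∈ D := by
        intro ξ hξ hξK
        obtain ⟨⟨h1, h2⟩, h3⟩ := hcdsub hξ
        obtain ⟨t, ht, htm⟩ := exists_finset hξK.2
        refine Set.mem_iInter₂.2 fun z hz => ?_
        have h4 := h1 z hz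
        rw [near_root (fun i => FT (φ i) ξ) t ht ?_ z, norm_prod] at h4
        · by_contra hno
          apply absurd h4
          rw [not_lt, ← ht, ← Finset.prod_const]
          apply Finset.prod_le_prod
          · intros; exact hε.le
          · intro w hw
            obtain ⟨η, h5, rfl⟩ := (htm w).1 hw
            by_contra hlt
            push Not at hlt
            apply hno
            refine ⟨η, ⟨h5.1.1, h5.1.2.le⟩, h5.2, ?_⟩
            rw [Metric.mem_closedBall, dist_comm, dist_eq_norm]
            exact hlt.le
        · intro w hw
          obtain ⟨η, h5, rfl⟩ := (htm w).1 hw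
          exact hrel ξ ⟨h3, hξK⟩ η h5
      by_cases hall : Set.Ioo c d ⊆ D
      · refine kill hHUP (K := K + 1) (by omega) (lt_trans hcd.1 hcd.2) φ hφ ?_
        intro ξ hξ η hη
        obtain ⟨⟨h1, h2⟩, h3⟩ := hcdsub hξ
        obtain ⟨k, h4, h5, h6⟩ := h ξ ⟨h2, η, hη⟩
        have h7 := hupStar_mem h6
        have h8 := hDcard ξ (hall hξ)
        rw [h7.2] at h8
        have h8' : K + 1 ≤ k := by exact_mod_cast h8
        obtain rfl : k = K + 1 := le_antisymm h5 h8'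
        obtain ⟨η', h9, h10⟩ := exists_Img hper hη
        have := hrel ξ ⟨h3, h7⟩ η' h9
        rw [h10] at this
        rw [this]; ring
      · obtain ⟨ξ₁, hξ₁, hξ₁D⟩ := Set.not_subset.1 hall
        have : Set.Ioo c d ∩ Dᶜ ∈ nhds ξ₁ :=
          (isOpen_Ioo.inter hD.isOpen_compl).mem_nhds ⟨hξ₁, hξ₁D⟩
        obtain ⟨p, q, hpq, hsub⟩ := mem_nhds_iff_exists_Ioo_subset.1 this
        refine ih p q (lt_trans hpq.1 hpq.2) fun ξ hξ => ?_
        obtain ⟨h1, h2⟩ := hsub hξ.1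
        obtain ⟨k, h4, h5, h6⟩ := h ξ ⟨(hcdsub h1).1.2, hξ.2⟩
        refine ⟨k, h4, ?_, h6⟩
        rcases h5.lt_or_eq with h5 | h5
        · omega
        · subst h5
          exact (h2 (hsubD ξ h1 (hupStar_mem h6))).elim

theorem no_interval_in_union_of_stars (n : ℕ) (hn : 2 ≤ n) (Λ : Set (ℝ × ℝ))
    (hclosed : IsClosed Λ) (hper : Periodic2 Λ) (hHUP : IsHUP n Λ) :
    ∀ l : ℕ, 1 ≤ l → ∀ α : Fin l → ℕ, StrictMono α →
      (∀ i, 1 ≤ α i ∧ α i ≤ n - 1) →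
      ¬ ∃ a b : ℝ, a < b ∧ (Set.Ioo a b ∩ proj Λ).Nonempty ∧
        Set.Ioo a b ∩ proj Λ ⊆ ⋃ i : Fin l, projStarNeGen Λ n (α i) := by
  rintro l - α - hα ⟨a, b, hab, -, hsub⟩
  refine main_ind hn hclosed hper hHUP (n - 1) le_rfl a b hab fun ξ hξ => ?_
  obtain ⟨i, hi⟩ := Set.mem_iUnion.1 (hsub hξ)
  exact ⟨α i, (hα i).1, (hα i).2, hi⟩
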